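/- arXiv:1504.07364 — 2 statements merged into one kernel-verified Lean document; each statement's English description precedes it below -/
import Mathlib

section
/- Let r, s ∈ ℚ²∖ℤ². Then each Fricke function f_r is holomorphic on all of ℍ, and f_r(τ) = f_s(τ) for all τ ∈ ℍ if and only if r ≡ s (mod ℤ²) or r ≡ −s (mod ℤ²). In particular f_r depends only on ±r modulo ℤ². -/
open Complex UpperHalfPlane Matrix MatrixGroups CongruenceSubgroup
open scoped UpperHalfPlane Manifold Real

noncomputable section

/-- `N·τ` as a point of the upper half-plane (junk value `τ` if `N = 0`). -/
def hsmul (N : ℕ) (τ : UpperHalfPlane) : UpperHalfPlane :=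
  if hN : 0 < N then
    ⟨(N : ℂ) * τ, by
      have h0 : (0 : ℝ) < (N : ℝ) := by exact_mod_cast hN
      simpa [Complex.mul_im] using mul_pos h0 τ.2⟩
  else τ

/-- The Siegel function `g_r(τ)` given by its infinite product expansion. -/
def siegel (r : ℚ × ℚ) (τ : ℍ) : ℂ :=
  -Complex.exp ((Real.pi : ℂ) * Complex.I * (((r.1 : ℂ) ^ 2 - (r.1 : ℂ) + 1 / 6) * τ)) *
    Complex.exp ((Real.pi : ℂ) * Complex.I * (r.2 : ℂ) * ((r.1 : ℂ) - 1)) *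
    (1 - Complex.exp (2 * (Real.pi : ℂ) * Complex.I * ((r.1 : ℂ) * τ + (r.2 : ℂ)))) *
    ∏' n : ℕ,
      ((1 - Complex.exp (2 * (Real.pi : ℂ) * Complex.I *
          (((n : ℂ) + 1 + (r.1 : ℂ)) * τ + (r.2 : ℂ)))) *
       (1 - Complex.exp (2 * (Real.pi : ℂ) * Complex.I *
          (((n : ℂ) + 1 - (r.1 : ℂ)) * τ - (r.2 : ℂ)))))

/-- The lattice point `ω = m·τ + n` attached to a pair `(m,n) ∈ ℤ²`. -/
def lat (τ : ℍ) (p : ℤ × ℤ) : ℂ := (p.1 : ℂ) * τ + (p.2 : ℂ)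

/-- `g₂(τ) = 60 ∑_{ω ∈ L_τ ∖ {0}} ω⁻⁴`. -/
def g2C (τ : ℍ) : ℂ := 60 * ∑' p : {p : ℤ × ℤ // p ≠ 0}, ((lat τ p.1) ^ 4)⁻¹

/-- `g₃(τ) = 140 ∑_{ω ∈ L_τ ∖ {0}} ω⁻⁶`. -/
def g3C (τ : ℍ) : ℂ := 140 * ∑' p : {p : ℤ × ℤ // p ≠ 0}, ((lat τ p.1) ^ 6)⁻¹

/-- The discriminant `Δ(τ) = g₂(τ)³ - 27 g₃(τ)²`. -/
def discC (τ : ℍ) : ℂ := g2C τ ^ 3 - 27 * g3C τ ^ 2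

/-- The Weierstrass `℘`-function relative to the lattice `L_τ = ℤτ + ℤ`. -/
def wpC (z : ℂ) (τ : ℍ) : ℂ :=
  (z ^ 2)⁻¹ + ∑' p : {p : ℤ × ℤ // p ≠ 0}, (((z - lat τ p.1) ^ 2)⁻¹ - ((lat τ p.1) ^ 2)⁻¹)

/-- The Fricke function `f_r(τ)`. -/
def fricke (r : ℚ × ℚ) (τ : ℍ) : ℂ :=
  -(2 ^ 7 * 3 ^ 5) * (g2C τ * g3C τ / discC τ) * wpC ((r.1 : ℂ) * τ + (r.2 : ℂ)) τ

/-- The elliptic modular `j`-invariant. -/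
def jinv (τ : ℍ) : ℂ := 1728 * g2C τ ^ 3 / discC τ

/-- The Dedekind eta function. -/
def etaC (τ : ℍ) : ℂ :=
  (Real.sqrt (2 * Real.pi) : ℂ) * Complex.exp (2 * (Real.pi : ℂ) * Complex.I / 16) *
    Complex.exp (2 * (Real.pi : ℂ) * Complex.I * τ / 24) *
    ∏' n : ℕ, (1 - Complex.exp (2 * (Real.pi : ℂ) * Complex.I * ((n : ℂ) + 1) * τ))

/-- `r ∈ ℚ² ∖ ℤ²`. -/
def NonIntegral (r : ℚ × ℚ) : Prop := ¬ ∃ a b : ℤ, r = ((a : ℚ), (b : ℚ))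

/-- `r ∈ (1/N)ℤ²`. -/
def InDen (N : ℕ) (r : ℚ × ℚ) : Prop := ∃ a b : ℤ, r = ((a : ℚ) / N, (b : ℚ) / N)

/-- Membership in `Γ^1(N)`: `a ≡ d ≡ 1` and `b ≡ 0 (mod N)`. -/
def GammaUpper (N : ℕ) (γ : SL(2, ℤ)) : Prop :=
  ((γ 0 0 : ℤ) : ZMod N) = 1 ∧ ((γ 1 1 : ℤ) : ZMod N) = 1 ∧ ((γ 0 1 : ℤ) : ZMod N) = 0

/-- The transpose action `ᵗγ r = (a r₁ + c r₂, b r₁ + d r₂)` of `γ = [[a,b],[c,d]]`. -/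
def tAct (γ : SL(2, ℤ)) (r : ℚ × ℚ) : ℚ × ℚ :=
  ((γ 0 0 : ℚ) * r.1 + (γ 1 0 : ℚ) * r.2, (γ 0 1 : ℚ) * r.1 + (γ 1 1 : ℚ) * r.2)

/-- The power `q^{n/d} = e^{2πi(n/d)τ}`. -/
def qpow (d : ℕ) (n : ℤ) (τ : ℍ) : ℂ :=
  Complex.exp (2 * (Real.pi : ℂ) * Complex.I * ((n : ℂ) / (d : ℂ)) * τ)

/-- `h` is a weakly holomorphic modular function for `Γ₁(N)` with rational
Fourier coefficients: holomorphic on `ℍ`, `Γ₁(N)`-invariant, with a convergent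
`q`-expansion at `i∞` having rational coefficients, and meromorphic at every cusp. -/
def IsWeaklyHolo1 (N : ℕ) (h : ℍ → ℂ) : Prop :=
  MDifferentiable 𝓘(ℂ) 𝓘(ℂ) h ∧
  (∀ γ ∈ Gamma1 N, ∀ τ : ℍ, h (γ • τ) = h τ) ∧
  (∃ n₀ : ℤ, ∃ c : ℕ → ℚ,
    ∀ τ : ℍ, HasSum (fun n : ℕ => (c n : ℂ) * qpow 1 (n₀ + n) τ) (h τ)) ∧
  (∀ γ : SL(2, ℤ), ∃ n₀ : ℤ, ∃ c : ℕ → ℂ,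
    ∀ τ : ℍ, HasSum (fun n : ℕ => c n * qpow N (n₀ + n) τ) (h (γ • τ)))

/-- `h` is a weakly holomorphic modular function for `Γ^1(N)` with rational
Fourier coefficients (the expansion at `i∞` being in powers of `q^{1/N}`). -/
def IsWeaklyHoloUp (N : ℕ) (h : ℍ → ℂ) : Prop :=
  MDifferentiable 𝓘(ℂ) 𝓘(ℂ) h ∧
  (∀ γ : SL(2, ℤ), GammaUpper N γ → ∀ τ : ℍ, h (γ • τ) = h τ) ∧
  (∃ n₀ : ℤ, ∃ c : ℕ → ℚ,
    ∀ τ : ℍ, HasSum (fun n : ℕ => (c n : ℂ) * qpow N (n₀ + n) τ) (h τ)) ∧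
  (∀ γ : SL(2, ℤ), ∃ n₀ : ℤ, ∃ c : ℕ → ℂ,
    ∀ τ : ℍ, HasSum (fun n : ℕ => c n * qpow N (n₀ + n) τ) (h (γ • τ)))

/-- The Weierstrass-unit generator
`f^1_{m,N} = (f_{(1/N,0)} - f_{(1/m,0)})/(f_{(2/m,0)} - f_{(1/m,0)})`. -/
def fUnit (m N : ℕ) (τ : ℍ) : ℂ :=
  (fricke ((1 : ℚ) / N, 0) τ - fricke ((1 : ℚ) / m, 0) τ) /
    (fricke ((2 : ℚ) / m, 0) τ - fricke ((1 : ℚ) / m, 0) τ)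

/-!
At a point `τ` with `g₂(τ) g₃(τ) ≠ 0`, the equation `f_r(τ) = f_s(τ)` says that `℘` takes the same
value at the points `r₁τ + r₂` and `s₁τ + s₂`; such a `τ` exists because `E₄ E₆` is a non-zero
modular form. Now `℘(z) = ℘(w)` forces `z ≡ ±w` modulo the lattice: the cubic equation for `℘'`
gives `℘'(z) = ±℘'(w)`, so after a sign change `℘(z + ·)` and `℘(w + ·)` solve the same initial
value problem for `℘'' = 6℘² - g₂/2`. They therefore coincide, and `z - w` is a lattice point since
translation by it carries the pole of `℘` at `0` to a pole. Holomorphy follows from the locally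
uniform convergence of the lattice sum for `℘` in `(z, τ)`, together with the holomorphy of `E₄` and
`E₆` and the non-vanishing of `Δ`.
-/

section Summation
open Filter Topology

lemma tsum_subtype_ne {ι M : Type*} [AddCommGroup M] [TopologicalSpace M]
    [IsTopologicalAddGroup M] [T2Space M] {f : ι → M} (a : ι) (hf : Summable f) :
    ∑' i : {i // i ≠ a}, f i = ∑' i, f i - f a := by
  have sum_add_tsum := hf.sum_add_tsum_compl (s := {a})
  rw [Finset.sum_singleton, Finset.coe_singleton] at sum_add_tsum
  exact eq_sub_of_add_eq' sum_add_tsum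

lemma norm_vecCons_int (m n : ℤ) : ‖![m, n]‖ = ‖(m, n)‖ := by
  simp [EisensteinSeries.norm_eq_max_natAbs, Prod.norm_def, Int.norm_eq_abs]

lemma summable_norm_rpow_int_prod {k : ℝ} (hk : 2 < k) :
    Summable fun p : ℤ × ℤ ↦ ‖p‖ ^ (-k) := by
  rw [← (finTwoArrowEquiv ℤ).summable_iff]
  refine (EisensteinSeries.summable_one_div_norm_rpow hk).congr fun x ↦ ?_
  rw [Function.comp_apply, finTwoArrowEquiv_apply, ← norm_vecCons_int, ← FinVec.etaExpand_eq x]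
  rfl

theorem mdifferentiable_tsum {ι : Type*} {f : ι → ℍ → ℂ}
    (hf : ∀ i, MDifferentiable 𝓘(ℂ) 𝓘(ℂ) (f i))
    (hbound : ∀ K : Set ℍ, IsCompact K →
      ∃ u : ι → ℝ, Summable u ∧ ∀ᶠ i in cofinite, ∀ τ ∈ K, ‖f i τ‖ ≤ u i) :
    MDifferentiable 𝓘(ℂ) 𝓘(ℂ) fun τ ↦ ∑' i, f i τ := by
  simp only [mdifferentiable_iff] at hf ⊢
  refine SummableLocallyUniformlyOn.differentiableOn isOpen_upperHalfPlaneSet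
    (.of_locally_bounded_eventually isOpen_upperHalfPlaneSet fun K hK hK_compact ↦ ?_)
    fun i w hw ↦ (hf i).differentiableAt (isOpen_upperHalfPlaneSet.mem_nhds hw)
  have compact_preimage : IsCompact ((↑) ⁻¹' K : Set ℍ) :=
    isOpenEmbedding_coe.isInducing.isCompact_preimage_iff (by simpa using hK) |>.2 hK_compact
  obtain ⟨u, hu, hfu⟩ := hbound _ compact_preimage
  refine ⟨u, hu, hfu.mono fun i hi w hw ↦ hi (ofComplex w) ?_⟩
  rwa [Set.mem_preimage, ofComplex_apply_of_im_pos (hK hw)]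

end Summation

section LinearODE
open Filter Topology

variable {𝕜 E : Type*} [NontriviallyNormedField 𝕜] [CharZero 𝕜] [NormedAddCommGroup E]
  [NormedSpace 𝕜 E] [CompleteSpace E]

/-- Each differentiation lowers the order of vanishing by one, while the equation bounds the order
of `d''` below by that of `d`. -/
theorem eventually_eq_zero_of_deriv_deriv_eq_smul {d : 𝕜 → E} {a : 𝕜 → 𝕜} {x : 𝕜}
    (hd : AnalyticAt 𝕜 d x) (ha : AnalyticAt 𝕜 a x) (hx : d x = 0) (hx' : deriv d x = 0)
    (hode : deriv (deriv d) =ᶠ[𝓝 x] a • d) : ∀ᶠ u in 𝓝 x, d u = 0 := by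
  have order_deriv : analyticOrderAt (deriv d) x + 1 = analyticOrderAt d x := by
    simpa only [hx, sub_zero] using hd.analyticOrderAt_deriv_add_one
  have order_deriv_deriv :
      analyticOrderAt (deriv (deriv d)) x + 1 = analyticOrderAt (deriv d) x := by
    simpa only [hx', sub_zero] using hd.deriv.analyticOrderAt_deriv_add_one
  rw [analyticOrderAt_congr hode, analyticOrderAt_smul ha hd] at order_deriv_deriv
  rw [← analyticOrderAt_eq_top]
  by_contra h_ne_top
  lift analyticOrderAt d x to ℕ using h_ne_top with n
  have h_le : (n : ℕ∞) + 2 ≤ n := calc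
    (n : ℕ∞) + 2 ≤ analyticOrderAt a x + n + 1 + 1 := by
      rw [add_assoc _ 1 1, one_add_one_eq_two]; gcongr; exact le_add_self
    _ = n := by rw [order_deriv_deriv, order_deriv]
  norm_cast at h_le
  lia

end LinearODE

section Weierstrass
open Filter Topology
open scoped PeriodPair

variable (L : PeriodPair) {z w c : ℂ}

lemma meromorphicOrderAt_derivWeierstrassP_ne_top (z : ℂ) : meromorphicOrderAt ℘'[L] z ≠ ⊤ := by
  have order_zero : meromorphicOrderAt ℘'[L] 0 = ((-2 - 1 : ℤ) : WithTop ℤ) := by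
    rw [← L.deriv_weierstrassP]
    exact meromorphicOrderAt_deriv_eq_sub_one (by norm_num) (L.order_weierstrassP 0 (zero_mem _))
  refine MeromorphicOn.meromorphicOrderAt_ne_top_of_isPreconnected (x := 0) (U := Set.univ)
    (fun x _ ↦ L.meromorphic_derivWeierstrassP x) isPreconnected_univ trivial trivial ?_
  rw [order_zero]
  exact WithTop.coe_ne_top

lemma deriv_derivWeierstrassP (hz : z ∉ L.lattice) :
    deriv ℘'[L] z = 6 * ℘[L] z ^ 2 - L.g₂ / 2 := by
  have off_lattice : ∀ᶠ u in 𝓝 z, u ∉ L.lattice := L.isClosed_lattice.isOpen_compl.mem_nhds hz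
  have deriv_relation : ∀ᶠ u in 𝓝 z,
      ℘'[L] u * deriv ℘'[L] u = ℘'[L] u * (6 * ℘[L] u ^ 2 - L.g₂ / 2) := by
    filter_upwards [off_lattice.eventually_nhds] with u hu
    have hP : HasDerivAt ℘[L] (℘'[L] u) u := by
      simpa using (L.analyticOnNhd_weierstrassP u hu.self_of_nhds).differentiableAt.hasDerivAt
    have hP' : HasDerivAt ℘'[L] (deriv ℘'[L] u) u :=
      (L.analyticOnNhd_derivWeierstrassP u hu.self_of_nhds).differentiableAt.hasDerivAt
    have relation : (fun v ↦ ℘'[L] v ^ 2) =ᶠ[𝓝 u]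
        fun v ↦ 4 * ℘[L] v ^ 3 - L.g₂ * ℘[L] v - L.g₃ :=
      hu.mono L.derivWeierstrassP_sq
    have := ((hP'.pow 2).congr_of_eventuallyEq relation.symm).unique
      ((((hP.pow 3).const_mul 4).sub (hP.const_mul L.g₂)).sub_const L.g₃)
    push_cast at this
    linear_combination this / 2
  have cancelled : deriv ℘'[L] =ᶠ[𝓝[≠] z] fun u ↦ 6 * ℘[L] u ^ 2 - L.g₂ / 2 := by
    filter_upwards [deriv_relation.filter_mono nhdsWithin_le_nhds,
      (meromorphicOrderAt_ne_top_iff_eventually_ne_zero (L.meromorphic_derivWeierstrassP z)).1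
        (meromorphicOrderAt_derivWeierstrassP_ne_top L z)] with u hu hne
    exact mul_left_cancel₀ hne hu
  have hP := L.analyticOnNhd_weierstrassP z hz
  have hP' := (L.analyticOnNhd_derivWeierstrassP z hz).deriv
  exact ((hP'.continuousAt.eventuallyEq_nhds_iff_eventuallyEq_nhdsNE
    (by fun_prop)).1 cancelled).self_of_nhds

lemma eventually_weierstrassP_add_eq (hz : z ∉ L.lattice) (hzc : z + c ∉ L.lattice)
    (h : ℘[L] (z + c) = ℘[L] z) (h' : ℘'[L] (z + c) = ℘'[L] z) :
    ∀ᶠ u in 𝓝 z, ℘[L] (u + c) = ℘[L] u := by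
  have off_lattice : ∀ᶠ u in 𝓝 z, u ∉ L.lattice ∧ u + c ∉ L.lattice :=
    (L.isClosed_lattice.isOpen_compl.eventually_mem hz).and
      ((continuous_add_const c).continuousAt.eventually_mem
        (L.isClosed_lattice.isOpen_compl.mem_nhds hzc))
  have analytic_P := L.analyticOnNhd_weierstrassP z hz
  have analytic_shift : AnalyticAt ℂ (fun u ↦ ℘[L] (u + c)) z :=
    (L.analyticOnNhd_weierstrassP _ hzc).fun_comp (f := (· + c)) (by fun_prop)
  have deriv_diff : ∀ᶠ u in 𝓝 z,
      deriv (fun v ↦ ℘[L] (v + c) - ℘[L] v) u = ℘'[L] (u + c) - ℘'[L] u := by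
    filter_upwards [analytic_P.eventually_analyticAt, analytic_shift.eventually_analyticAt]
      with u hu huc
    rw [deriv_fun_sub huc.differentiableAt hu.differentiableAt, deriv_comp_add_const,
      L.deriv_weierstrassP]
  have deriv_deriv_diff : deriv (deriv fun v ↦ ℘[L] (v + c) - ℘[L] v) =ᶠ[𝓝 z]
      (fun v ↦ 6 * (℘[L] (v + c) + ℘[L] v)) • fun v ↦ ℘[L] (v + c) - ℘[L] v := by
    filter_upwards [deriv_diff.eventually_nhds, off_lattice] with u hu ⟨hu₀, hu₁⟩
    have hP' := (L.analyticOnNhd_derivWeierstrassP u hu₀).differentiableAt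
    have hP'c := (L.analyticOnNhd_derivWeierstrassP _ hu₁).differentiableAt
    rw [EventuallyEq.deriv_eq hu, deriv_fun_sub (by fun_prop) hP', deriv_comp_add_const,
      deriv_derivWeierstrassP L hu₀, deriv_derivWeierstrassP L hu₁]
    simp only [Pi.smul_apply', smul_eq_mul]
    ring
  simpa only [Pi.sub_apply, sub_eq_zero] using eventually_eq_zero_of_deriv_deriv_eq_smul
    (analytic_shift.sub analytic_P) (analyticAt_const.mul (analytic_shift.add analytic_P))
    (sub_eq_zero.2 h) (deriv_diff.self_of_nhds.trans (sub_eq_zero.2 h')) deriv_deriv_diff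

lemma mem_lattice_of_eventually_weierstrassP_add_eq (h : ∀ᶠ u in 𝓝 z, ℘[L] (u + c) = ℘[L] u) :
    c ∈ L.lattice := by
  have meromorphic_shift : Meromorphic fun u ↦ ℘[L] (u + c) := fun u ↦
    meromorphicAt_fun_comp_add_const_iff_meromorphicAt.2 (L.meromorphic_weierstrassP _)
  have order_top : meromorphicOrderAt (fun u ↦ ℘[L] (u + c) - ℘[L] u) 0 = ⊤ := by
    by_contra h_ne_top
    refine MeromorphicOn.meromorphicOrderAt_ne_top_of_isPreconnected (y := z) (U := Set.univ)
      (fun u _ ↦ (meromorphic_shift u).sub (L.meromorphic_weierstrassP u)) isPreconnected_univ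
      trivial trivial h_ne_top (meromorphicOrderAt_eq_top_iff.2 ?_)
    exact (h.filter_mono nhdsWithin_le_nhds).mono fun u hu ↦ sub_eq_zero.2 hu
  have order_eq : meromorphicOrderAt ℘[L] c = -2 := calc
    meromorphicOrderAt ℘[L] c = meromorphicOrderAt (fun u ↦ ℘[L] (u + c)) 0 := by
      rw [meromorphicOrderAt_fun_comp_add_const_eq_meromorphicOrderAt, zero_add]
    _ = meromorphicOrderAt ℘[L] 0 := meromorphicOrderAt_congr <|
      (meromorphicOrderAt_eq_top_iff.1 order_top).mono fun u hu ↦ sub_eq_zero.1 hu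
    _ = -2 := L.order_weierstrassP 0 (zero_mem _)
  by_contra hc
  have order_nonneg := (L.analyticOnNhd_weierstrassP c hc).meromorphicOrderAt_nonneg
  rw [order_eq] at order_nonneg
  exact absurd order_nonneg (by decide)

lemma sub_mem_lattice_of_weierstrassP_eq (hz : z ∉ L.lattice) (hw : w ∉ L.lattice)
    (h : ℘[L] z = ℘[L] w) (h' : ℘'[L] z = ℘'[L] w) : z - w ∈ L.lattice := by
  obtain ⟨c, rfl⟩ : ∃ c, w + c = z := ⟨z - w, add_sub_cancel w z⟩
  rw [add_sub_cancel_left]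
  exact mem_lattice_of_eventually_weierstrassP_add_eq L
    (eventually_weierstrassP_add_eq L hw hz h h')

theorem weierstrassP_eq_weierstrassP_iff (hz : z ∉ L.lattice) (hw : w ∉ L.lattice) :
    ℘[L] z = ℘[L] w ↔ z - w ∈ L.lattice ∨ z + w ∈ L.lattice := by
  constructor
  · intro h
    have derivs_sq : ℘'[L] z ^ 2 = ℘'[L] w ^ 2 := by
      rw [L.derivWeierstrassP_sq z hz, L.derivWeierstrassP_sq w hw, h]
    refine (sq_eq_sq_iff_eq_or_eq_neg.1 derivs_sq).imp
      (sub_mem_lattice_of_weierstrassP_eq L hz hw h) fun h' ↦ ?_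
    rw [← sub_neg_eq_add]
    exact sub_mem_lattice_of_weierstrassP_eq L hz (by rwa [neg_mem_iff])
      (by rw [L.weierstrassP_neg, h]) (by rw [L.derivWeierstrassP_neg, h'])
  · rintro (h | h)
    · simpa using (L.weierstrassP_sub_coe z ⟨_, h⟩).symm
    · simpa using (L.weierstrassP_sub_coe z ⟨_, h⟩).symm

end Weierstrass

section Holomorphy
open Filter Topology

lemma mdifferentiable_const_mul_coe_add_const (a b : ℂ) :
    MDifferentiable 𝓘(ℂ) 𝓘(ℂ) fun τ : ℍ ↦ a * τ + b :=
  (mdifferentiable_const.mul mdifferentiable_coe).add mdifferentiable_const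

lemma exists_mul_norm_le_norm_lat {K : Set ℍ} (hK : IsCompact K) :
    ∃ c > 0, ∀ τ ∈ K, ∀ p : ℤ × ℤ, c * ‖p‖ ≤ ‖lat τ p‖ := by
  obtain ⟨A, B, hB, hKAB⟩ := subset_verticalStrip_of_isCompact hK
  refine ⟨EisensteinSeries.r ⟨⟨A, B⟩, hB⟩, EisensteinSeries.r_pos _, fun τ hτ ⟨m, n⟩ ↦ ?_⟩
  rw [← norm_vecCons_int]
  rcases eq_or_ne ![m, n] 0 with h | h
  · simp [h]
  · exact (mul_le_mul_of_nonneg_right (EisensteinSeries.r_lower_bound_on_verticalStrip _ hB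
      (hKAB hτ)) (norm_nonneg _)).trans (EisensteinSeries.r_mul_max_le _ h)

lemma lat_ne_zero (τ : ℍ) {p : ℤ × ℤ} (hp : p ≠ 0) : lat τ p ≠ 0 := by
  obtain ⟨c, hc, hle⟩ := exists_mul_norm_le_norm_lat (isCompact_singleton (x := τ))
  exact norm_pos_iff.1 ((mul_pos hc (norm_pos_iff.2 hp)).trans_le (hle τ rfl p))

theorem mdifferentiable_wpC {z : ℍ → ℂ} (hz : MDifferentiable 𝓘(ℂ) 𝓘(ℂ) z)
    (hz_lat : ∀ τ p, z τ ≠ lat τ p) : MDifferentiable 𝓘(ℂ) 𝓘(ℂ) fun τ ↦ wpC (z τ) τ := by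
  have mdiff_inv_sq : ∀ {f : ℍ → ℂ}, MDifferentiable 𝓘(ℂ) 𝓘(ℂ) f → (∀ τ, f τ ≠ 0) →
      MDifferentiable 𝓘(ℂ) 𝓘(ℂ) fun τ ↦ (f τ ^ 2)⁻¹ := fun hf hf₀ ↦
    (hf.pow 2).inv fun τ ↦ pow_ne_zero 2 (hf₀ τ)
  have mdiff_lat : ∀ p, MDifferentiable 𝓘(ℂ) 𝓘(ℂ) (lat · p) := fun p ↦
    mdifferentiable_const_mul_coe_add_const _ _
  refine (mdiff_inv_sq hz fun τ ↦ by simpa [lat] using hz_lat τ 0).add <|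
    mdifferentiable_tsum (fun p ↦ (mdiff_inv_sq (hz.sub (mdiff_lat p))
      fun τ ↦ sub_ne_zero.2 (hz_lat τ p)).sub
        (mdiff_inv_sq (mdiff_lat p) fun τ ↦ lat_ne_zero τ p.2)) fun K hK ↦ ?_
  obtain ⟨c, hc, hle_lat⟩ := exists_mul_norm_le_norm_lat hK
  obtain ⟨M, hM, hz_lt⟩ := (hK.image hz.continuous).isBounded.exists_pos_norm_lt
  have summable_bound : Summable fun p : {p : ℤ × ℤ // p ≠ 0} ↦
      10 * M * (c ^ (-3 : ℝ) * ‖p.1‖ ^ (-3 : ℝ)) :=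
    (((summable_norm_rpow_int_prod (by norm_num)).subtype _).mul_left _).mul_left _
  have norm_large : ∀ᶠ p : {p : ℤ × ℤ // p ≠ 0} in cofinite, 2 * M ≤ c * ‖p.1‖ :=
    (((cocompact_eq_cofinite (ℤ × ℤ) ▸ tendsto_norm_cocompact_atTop).comp
      Subtype.val_injective.tendsto_cofinite).const_mul_atTop hc).eventually_ge_atTop _
  refine ⟨_, summable_bound, norm_large.mono fun p hp τ hτ ↦ ?_⟩
  calc ‖((z τ - lat τ p) ^ 2)⁻¹ - (lat τ p ^ 2)⁻¹‖
      ≤ 10 * M * ‖lat τ p‖ ^ (-3 : ℝ) := by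
        simpa only [one_div] using PeriodPair.weierstrassP_bound M hM _ (hz_lt _ ⟨τ, hτ, rfl⟩) _
          (hp.trans (hle_lat τ hτ p))
    _ ≤ 10 * M * (c ^ (-3 : ℝ) * ‖p.1‖ ^ (-3 : ℝ)) := by
        rw [← Real.mul_rpow hc.le (norm_nonneg _)]
        gcongr 10 * M * ?_
        exact Real.rpow_le_rpow_of_nonpos (mul_pos hc (norm_pos_iff.2 p.2)) (hle_lat τ hτ p)
          (by norm_num)

end Holomorphy

section DivisionPoint

/-- The basis `(τ, 1)` of the lattice `ℤτ + ℤ`, which identifies `wpC · τ` with Mathlib's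
Weierstrass function `℘[latticeBasis τ]`. -/
def latticeBasis (τ : ℍ) : PeriodPair where
  ω₁ := τ
  ω₂ := 1
  indep := by
    refine LinearIndependent.pair_iff.2 fun a b h ↦ ?_
    have ha : a = 0 := by simpa [τ.im_ne_zero] using congrArg Complex.im h
    exact ⟨ha, by simpa [ha] using congrArg Complex.re h⟩

lemma coe_latticeEquivProd_symm_latticeBasis (τ : ℍ) (p : ℤ × ℤ) :
    ((latticeBasis τ).latticeEquivProd.symm p : ℂ) = lat τ p := by
  rw [PeriodPair.latticeEquiv_symm_apply]
  simp [lat, latticeBasis]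

lemma wpC_eq_weierstrassP (z : ℂ) (τ : ℍ) : wpC z τ = (latticeBasis τ).weierstrassP z := by
  have hasSum_pairs : HasSum (fun p ↦ ((z - lat τ p) ^ 2)⁻¹ - (lat τ p ^ 2)⁻¹)
      ((latticeBasis τ).weierstrassP z) := by
    refine (((latticeBasis τ).latticeEquivProd.symm.toEquiv.hasSum_iff).2
      ((latticeBasis τ).hasSum_weierstrassP z)).congr_fun fun p ↦ ?_
    simp [← coe_latticeEquivProd_symm_latticeBasis]
  rw [wpC, tsum_subtype_ne 0 hasSum_pairs.summable, hasSum_pairs.tsum_eq]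
  simp [lat]

/-- The point `r₁τ + r₂` of `ℂ`, a division point of the lattice `ℤτ + ℤ`, at which `f_r(τ)`
evaluates `℘`. -/
def divisionPoint (r : ℚ × ℚ) (τ : ℍ) : ℂ := (r.1 : ℂ) * τ + (r.2 : ℂ)

lemma divisionPoint_add (r s : ℚ × ℚ) (τ : ℍ) :
    divisionPoint (r + s) τ = divisionPoint r τ + divisionPoint s τ := by
  simp only [divisionPoint, Prod.fst_add, Prod.snd_add, Rat.cast_add]
  ring

lemma divisionPoint_sub (r s : ℚ × ℚ) (τ : ℍ) :
    divisionPoint (r - s) τ = divisionPoint r τ - divisionPoint s τ := by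
  simp only [divisionPoint, Prod.fst_sub, Prod.snd_sub, Rat.cast_sub]
  ring

lemma divisionPoint_mem_lattice_iff {r : ℚ × ℚ} {τ : ℍ} :
    divisionPoint r τ ∈ (latticeBasis τ).lattice ↔ ∃ a b : ℤ, r = ((a : ℚ), (b : ℚ)) := by
  have mem_lattice_iff := (latticeBasis τ).mul_ω₁_add_mul_ω₂_mem_lattice (α := r.1) (β := r.2)
  simp only [latticeBasis, mul_one] at mem_lattice_iff
  rw [divisionPoint, latticeBasis, mem_lattice_iff, Rat.den_eq_one_iff,
    Rat.den_eq_one_iff]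
  constructor
  · exact fun ⟨h₁, h₂⟩ ↦ ⟨r.1.num, r.2.num, Prod.ext h₁.symm h₂.symm⟩
  · rintro ⟨a, b, rfl⟩
    exact ⟨by simp, by simp⟩

variable {r s : ℚ × ℚ}

lemma NonIntegral.divisionPoint_notMem_lattice (hr : NonIntegral r) (τ : ℍ) :
    divisionPoint r τ ∉ (latticeBasis τ).lattice :=
  divisionPoint_mem_lattice_iff.not.2 hr

lemma wpC_divisionPoint_eq_iff (hr : NonIntegral r) (hs : NonIntegral s) (τ : ℍ) :
    wpC (divisionPoint r τ) τ = wpC (divisionPoint s τ) τ ↔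
      (∃ a b : ℤ, r - s = ((a : ℚ), (b : ℚ))) ∨ (∃ a b : ℤ, r + s = ((a : ℚ), (b : ℚ))) := by
  rw [wpC_eq_weierstrassP, wpC_eq_weierstrassP,
    weierstrassP_eq_weierstrassP_iff _ (hr.divisionPoint_notMem_lattice τ)
      (hs.divisionPoint_notMem_lattice τ), ← divisionPoint_sub, ← divisionPoint_add,
    divisionPoint_mem_lattice_iff, divisionPoint_mem_lattice_iff]

lemma mdifferentiable_wpC_divisionPoint (hr : NonIntegral r) :
    MDifferentiable 𝓘(ℂ) 𝓘(ℂ) fun τ ↦ wpC (divisionPoint r τ) τ := by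
  refine mdifferentiable_wpC (mdifferentiable_const_mul_coe_add_const _ _) fun τ p h ↦
    hr.divisionPoint_notMem_lattice τ ?_
  rw [h, ← coe_latticeEquivProd_symm_latticeBasis]
  exact Subtype.coe_prop _

end DivisionPoint

section Eisenstein

lemma tsum_inv_lat_pow {k : ℕ} (hk : 3 ≤ k) (τ : ℍ) :
    ∑' p : {p : ℤ × ℤ // p ≠ 0}, (lat τ p ^ k)⁻¹ = 2 * riemannZeta k * ModularForm.E hk τ := by
  have summand_eq : ∀ p : ℤ × ℤ, (lat τ p ^ k)⁻¹ = EisensteinSeries.eisSummand k ![p.1, p.2] τ :=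
    fun p ↦ by simp [EisensteinSeries.eisSummand, lat]
  have lat_zero : lat τ 0 = 0 := by simp [lat]
  have E_apply : ModularForm.E hk τ = 1 / 2 * eisensteinSeries (N := 1) 0 k τ := rfl
  calc ∑' p : {p : ℤ × ℤ // p ≠ 0}, (lat τ p ^ k)⁻¹
      = ∑' p : ℤ × ℤ, (lat τ p ^ k)⁻¹ := by
        rw [tsum_subtype_ne (f := fun p ↦ (lat τ p ^ k)⁻¹) 0
          (by simpa only [summand_eq] using! summable_prod_eisSummand hk τ), lat_zero,
          zero_pow (by lia : k ≠ 0), _root_.inv_zero, sub_zero]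
    _ = ∑' x : Fin 2 → ℤ, EisensteinSeries.eisSummand k x τ := by
        simp only [summand_eq]
        exact (finTwoArrowEquiv ℤ).symm.tsum_eq fun x ↦ EisensteinSeries.eisSummand k x τ
    _ = 2 * riemannZeta k * ModularForm.E hk τ := by
        rw [tsum_eisSummand_eq_riemannZeta_mul_eisensteinSeries hk, E_apply]
        ring

lemma riemannZeta_six : riemannZeta 6 = π ^ 6 / 945 := by
  have bernoulli_six : bernoulli (2 * 3) = 1 / 42 := by decide +kernel
  rw [show (6 : ℂ) = 2 * (3 : ℕ) by norm_num, riemannZeta_two_mul_nat three_ne_zero,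
    bernoulli_six]
  push_cast [Nat.factorial]
  ring

lemma g2C_eq (τ : ℍ) : g2C τ = 4 / 3 * π ^ 4 * ModularForm.E₄ τ := by
  rw [g2C, tsum_inv_lat_pow (k := 4) (by norm_num), Nat.cast_ofNat, riemannZeta_four]
  ring

lemma g3C_eq (τ : ℍ) : g3C τ = 8 / 27 * π ^ 6 * ModularForm.E₆ τ := by
  rw [g3C, tsum_inv_lat_pow (k := 6) (by norm_num), Nat.cast_ofNat, riemannZeta_six]
  ring

lemma discC_eq (τ : ℍ) : discC τ = (2 * π) ^ 12 * ModularForm.discriminant τ := by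
  rw [ModularForm.discriminant_eq_E₄_cube_sub_E₆_sq, discC, g2C_eq, g3C_eq]
  ring

lemma discC_ne_zero (τ : ℍ) : discC τ ≠ 0 := by
  rw [discC_eq]
  exact mul_ne_zero (pow_ne_zero _ (by simp)) (ModularForm.discriminant_ne_zero τ)

lemma mdifferentiable_g2C : MDifferentiable 𝓘(ℂ) 𝓘(ℂ) g2C :=
  funext g2C_eq ▸ mdifferentiable_const.mul ModularForm.E₄.holo'

lemma mdifferentiable_g3C : MDifferentiable 𝓘(ℂ) 𝓘(ℂ) g3C :=
  funext g3C_eq ▸ mdifferentiable_const.mul ModularForm.E₆.holo'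

lemma mdifferentiable_discC : MDifferentiable 𝓘(ℂ) 𝓘(ℂ) discC :=
  (mdifferentiable_g2C.pow 3).sub (mdifferentiable_const.mul (mdifferentiable_g3C.pow 2))

lemma exists_g2C_ne_zero_and_g3C_ne_zero : ∃ τ : ℍ, g2C τ ≠ 0 ∧ g3C τ ≠ 0 := by
  have mul_ne : ModularForm.E₄.mul ModularForm.E₆ ≠ 0 :=
    ModularForm.mul_ne_zero ⟨1, one_mem_strictPeriods_SL, one_pos⟩
      (EisensteinSeries.E_ne_zero _ ⟨2, rfl⟩) (EisensteinSeries.E_ne_zero _ ⟨3, rfl⟩)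
  obtain ⟨τ, hτ⟩ := DFunLike.ne_iff.1 mul_ne
  have hτ' : ModularForm.E₄ τ ≠ 0 ∧ ModularForm.E₆ τ ≠ 0 := mul_ne_zero_iff.1 hτ
  exact ⟨τ, by simpa [g2C_eq] using hτ'.1, by simpa [g3C_eq] using hτ'.2⟩

end Eisenstein

section Fricke

variable {r s : ℚ × ℚ}

theorem mdifferentiable_fricke (hr : NonIntegral r) : MDifferentiable 𝓘(ℂ) 𝓘(ℂ) (fricke r) :=
  (mdifferentiable_const.mul ((mdifferentiable_g2C.mul mdifferentiable_g3C).div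
    mdifferentiable_discC discC_ne_zero)).mul (mdifferentiable_wpC_divisionPoint hr)

lemma fricke_apply_eq_iff {τ : ℍ} (h₂ : g2C τ ≠ 0) (h₃ : g3C τ ≠ 0) :
    fricke r τ = fricke s τ ↔ wpC (divisionPoint r τ) τ = wpC (divisionPoint s τ) τ :=
  mul_right_inj' <| mul_ne_zero (by norm_num) (div_ne_zero (mul_ne_zero h₂ h₃) (discC_ne_zero τ))

end Fricke

/-- each Fricke function is holomorphic on `ℍ`, and
`f_r = f_s` iff `r ≡ s` or `r ≡ -s (mod ℤ²)`. -/
theorem statement4 (r s : ℚ × ℚ) (hr : NonIntegral r) (hs : NonIntegral s) :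
    MDifferentiable 𝓘(ℂ) 𝓘(ℂ) (fricke r) ∧
    ((∀ τ : ℍ, fricke r τ = fricke s τ) ↔
      ((∃ a b : ℤ, r - s = ((a : ℚ), (b : ℚ))) ∨
       (∃ a b : ℤ, r + s = ((a : ℚ), (b : ℚ))))) := by
  refine ⟨mdifferentiable_fricke hr, fun h ↦ ?_, fun h τ ↦ ?_⟩
  · obtain ⟨τ, h₂, h₃⟩ := exists_g2C_ne_zero_and_g3C_ne_zero
    exact (wpC_divisionPoint_eq_iff hr hs τ).1 ((fricke_apply_eq_iff h₂ h₃).1 (h τ))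
  · exact congrArg (_ * ·) ((wpC_divisionPoint_eq_iff hr hs τ).2 h)
end
end

section
/- Let N > 1 be an integer and let {m(r)} be a family of integers indexed by r ∈ (1/N)ℤ²∖ℤ² with m(r) = 0 for all but finitely many r. If ∑_r m(r) ≡ 0 (mod 12), then for every γ ∈ SL₂(ℤ) and all τ ∈ ℍ, ∏_r g_r(γτ)^{m(r)} = ∏_r g_{ᵗγ r}(τ)^{m(r)}, where for γ = [[a,b],[c,d]] one sets ᵗγ r = (a r₁ + c r₂, b r₁ + d r₂). -/
open Complex UpperHalfPlane Matrix MatrixGroups CongruenceSubgroup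
open scoped UpperHalfPlane Manifold Real

noncomputable section

/-! For `z = r₁τ + r₂`, the Siegel function `g_r(τ)` is an exponential times `θ₁(z; τ) / η(τ)`. An
entire function of `z` that vanishes at `0` and has the multipliers of `θ₁` under `z ↦ z + 1` and
`z ↦ z + τ` is a constant multiple of `θ₁`: the quotient is entire and doubly periodic, hence
constant. Applied to the suitably normalised `θ₁(z/τ; -1/τ)`, this gives the transformation law
under `τ ↦ -1/τ`, whose constant is read off from the derivatives at `z = 0`, that is, from
`η(-1/τ)² = -iτ η(τ)²`. The law under `τ ↦ τ + 1` is visible in the product. Hence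
`g_r(γτ) = ε(γ) g_{ᵗγ r}(τ)` with a twelfth root of unity `ε(γ)` that does not depend on `r`. -/

open Filter Topology

local notation "𝕢" => Function.Periodic.qParam

section EntireFunctions

variable {f g h μ : ℂ → ℂ}

theorem analyticOrderAt_periodic_of_multiplier {ω : ℂ} (hg : Differentiable ℂ g)
    (hμ : Differentiable ℂ μ) (hμ0 : ∀ z, μ z ≠ 0) (hgω : ∀ z, g (z + ω) = μ z * g z) :
    Function.Periodic (analyticOrderAt g) ω := by
  intro z
  calc analyticOrderAt g (z + ω) = analyticOrderAt (g ∘ (· + ω)) z :=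
        (analyticOrderAt_comp_of_deriv_ne_zero (g := (· + ω)) (by fun_prop) (by simp)).symm
    _ = analyticOrderAt (μ * g) z := congrArg (analyticOrderAt · z) (funext hgω)
    _ = analyticOrderAt g z := by
        rw [analyticOrderAt_mul (hμ.analyticAt z) (hg.analyticAt z),
          (hμ.analyticAt z).analyticOrderAt_eq_zero.2 (hμ0 z), zero_add]

theorem meromorphicOrderAt_div_nonneg {z : ℂ} (hf : AnalyticAt ℂ f z) (hg : AnalyticAt ℂ g z)
    (hg_top : analyticOrderAt g z ≠ ⊤) (hle : analyticOrderAt g z ≤ analyticOrderAt f z) :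
    0 ≤ meromorphicOrderAt (f / g) z := by
  rw [meromorphicOrderAt_div hf.meromorphicAt hg.meromorphicAt, hf.meromorphicOrderAt_eq,
    hg.meromorphicOrderAt_eq]
  generalize analyticOrderAt g z = n at hg_top hle ⊢
  generalize analyticOrderAt f z = m at hle ⊢
  lift n to ℕ using hg_top
  induction m with
  | top => exact le_top
  | coe m =>
    have hnm : (n : ℤ) ≤ m := by exact_mod_cast hle
    exact WithTop.coe_le_coe.2 (sub_nonneg.2 hnm)

theorem exists_differentiable_eq_mul_of_analyticOrderAt_le (hf : Differentiable ℂ f)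
    (hg : Differentiable ℂ g) (hle : ∀ z, analyticOrderAt g z ≤ analyticOrderAt f z) :
    ∃ h : ℂ → ℂ, Differentiable ℂ h ∧ f = h * g := by
  have eq_top_iff {k : ℂ → ℂ} (hk : Differentiable ℂ k) (z : ℂ) :
      analyticOrderAt k z = ⊤ ↔ k = 0 :=
    AnalyticOnNhd.analyticOrderAt_eq_top_iff_eq_zero z hk.analyticAt
  by_cases hg0 : g = 0
  · have hf0 : f = 0 := (eq_top_iff hf 0).1 (top_le_iff.1 ((eq_top_iff hg 0).2 hg0 ▸ hle 0))
    exact ⟨0, differentiable_const 0, by simp [hf0]⟩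
  have hg_top (z : ℂ) : analyticOrderAt g z ≠ ⊤ := (eq_top_iff hg z).not.2 hg0
  have hmer : MeromorphicOn (f / g) Set.univ := fun z _ ↦
    (hf.analyticAt z).meromorphicAt.div (hg.analyticAt z).meromorphicAt
  set φ := toMeromorphicNFOn (f / g) Set.univ with hφ_def
  have hφ (z : ℂ) : AnalyticAt ℂ φ z := by
    rw [← (meromorphicNFOn_toMeromorphicNFOn _ _
      (Set.mem_univ z)).meromorphicOrderAt_nonneg_iff_analyticAt,
      meromorphicOrderAt_toMeromorphicNFOn hmer (Set.mem_univ z)]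
    exact meromorphicOrderAt_div_nonneg (hf.analyticAt z) (hg.analyticAt z) (hg_top z) (hle z)
  refine ⟨φ, fun z ↦ (hφ z).differentiableAt, funext fun z ↦ ?_⟩
  have hev : f =ᶠ[𝓝[≠] z] φ * g := by
    filter_upwards [hmer.toMeromorphicNFOn_eq_self_on_nhdsNE (Set.mem_univ z),
      (hg.analyticAt z).eventually_eq_zero_or_eventually_ne_zero.resolve_left
        (analyticOrderAt_eq_top.not.1 (hg_top z))] with w hφw hgw
    rw [Pi.mul_apply, hφ_def, hφw, Pi.div_apply, div_mul_cancel₀ _ hgw]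
  exact ((hf.continuous.continuousAt.eventuallyEq_nhds_iff_eventuallyEq_nhdsNE
    ((hφ z).continuousAt.mul hg.continuous.continuousAt)).1 hev).eq_of_nhds

theorem apply_add_of_mem_lattice {α : Type*} (L : PeriodPair) {k : ℂ → α}
    (h₁ : Function.Periodic k L.ω₁) (h₂ : Function.Periodic k L.ω₂) (z : ℂ) {ω : ℂ}
    (hω : ω ∈ L.lattice) : k (z + ω) = k z := by
  obtain ⟨m, n, rfl⟩ := PeriodPair.mem_lattice.1 hω
  rw [← add_assoc, h₂.int_mul n, h₁.int_mul m]

theorem apply_eq_apply_of_differentiable_of_periodic (L : PeriodPair) (hh : Differentiable ℂ h)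
    (h₁ : Function.Periodic h L.ω₁) (h₂ : Function.Periodic h L.ω₂) (z w : ℂ) : h z = h w := by
  have hcompact := IsZLattice.isCompact_range_of_periodic L.lattice h hh.continuous
    fun z _ hω ↦ apply_add_of_mem_lattice L h₁ h₂ z hω
  exact hh.apply_eq_apply_of_bounded hcompact.isBounded z w

theorem exists_eq_const_mul_of_multipliers (L : PeriodPair) {μ₁ μ₂ : ℂ → ℂ}
    (hf : Differentiable ℂ f) (hg : Differentiable ℂ g)
    (hf₁ : ∀ z, f (z + L.ω₁) = μ₁ z * f z) (hg₁ : ∀ z, g (z + L.ω₁) = μ₁ z * g z)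
    (hf₂ : ∀ z, f (z + L.ω₂) = μ₂ z * f z) (hg₂ : ∀ z, g (z + L.ω₂) = μ₂ z * g z)
    (hle : ∀ z, analyticOrderAt g z ≤ analyticOrderAt f z) :
    ∃ c : ℂ, ∀ z, f z = c * g z := by
  obtain ⟨h, hh, rfl⟩ := exists_differentiable_eq_mul_of_analyticOrderAt_le hf hg hle
  rcases eq_or_ne g 0 with rfl | hg0
  · exact ⟨0, by simp⟩
  have hper {ω : ℂ} {μ : ℂ → ℂ} (hfω : ∀ z, (h * g) (z + ω) = μ z * (h * g) z)
      (hgω : ∀ z, g (z + ω) = μ z * g z) : Function.Periodic h ω := by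
    have hmul : ∀ z, (h (z + ω) - h z) * g (z + ω) = 0 := fun z ↦ by
      have := hfω z
      simp only [Pi.mul_apply] at this
      linear_combination this - h z * hgω z
    have hdiff : (fun z ↦ h (z + ω) - h z) = 0 ∨ (fun z ↦ g (z + ω)) = 0 := by
      simpa [funext_iff] using AnalyticOnNhd.eq_zero_or_eq_zero_of_mul_eq_zero
        (f := fun z ↦ h (z + ω) - h z) (g := fun z ↦ g (z + ω))
        (fun z _ ↦ Differentiable.analyticAt (by fun_prop) z)
        (fun z _ ↦ Differentiable.analyticAt (by fun_prop) z)
        (fun z _ ↦ hmul z) isPreconnected_univ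
    refine fun z ↦ sub_eq_zero.1 (congrFun (hdiff.resolve_right fun h0 ↦ hg0 ?_) z)
    exact funext fun w ↦ by simpa using congrFun h0 (w - ω)
  refine ⟨h 0, fun z ↦ ?_⟩
  rw [Pi.mul_apply, apply_eq_apply_of_differentiable_of_periodic L hh (hper hf₁ hg₁)
    (hper hf₂ hg₂) z 0]

end EntireFunctions

section QParam

variable (h : ℝ) (z w : ℂ)

theorem qParam_add : 𝕢 h (z + w) = 𝕢 h z * 𝕢 h w := by
  simp only [Function.Periodic.qParam, ← Complex.exp_add]
  ring_nf

theorem qParam_one : 𝕢 1 z = Complex.exp (2 * π * Complex.I * z) := by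
  rw [Function.Periodic.qParam, ofReal_one, div_one]

theorem qParam_zero : 𝕢 h 0 = 1 := by
  simp [Function.Periodic.qParam]

theorem qParam_natCast_mul (n : ℕ) : 𝕢 h (n * z) = 𝕢 h z ^ n := by
  simp only [Function.Periodic.qParam, ← Complex.exp_nat_mul]
  ring_nf

theorem qParam_neg : 𝕢 h (-z) = (𝕢 h z)⁻¹ :=
  eq_inv_of_mul_eq_one_left (by rw [← qParam_add, neg_add_cancel, qParam_zero])

variable {z} in
theorem qParam_one_eq_one_iff : 𝕢 1 z = 1 ↔ ∃ n : ℤ, z = n := by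
  simp only [Function.Periodic.qParam, Complex.exp_eq_one_iff, ofReal_one, div_one,
    mul_comm (2 * π * Complex.I) z, mul_left_inj' two_pi_I_ne_zero]

theorem qParam_one_one : 𝕢 1 1 = 1 :=
  qParam_one_eq_one_iff.2 ⟨1, by simp⟩

theorem qParam_one_half : 𝕢 1 (1 / 2) = -1 := by
  rw [Function.Periodic.qParam, ← Complex.exp_pi_mul_I]
  congr 1
  push_cast
  ring

theorem hasDerivAt_qParam : HasDerivAt (𝕢 h) (2 * π * Complex.I / h * 𝕢 h z) z := by
  have hlin : HasDerivAt (fun z : ℂ ↦ 2 * π * Complex.I * z / h) (2 * π * Complex.I / h) z := by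
    simpa using ((hasDerivAt_id z).const_mul (2 * π * Complex.I)).div_const (h : ℂ)
  exact hlin.cexp.congr_deriv (mul_comm _ _)

end QParam

/-- The `q`-Pochhammer symbol `(w; q)_∞ = ∏_{n ≥ 0} (1 - qⁿ w)`, for `‖q‖ < 1`. -/
def qPochhammer (q w : ℂ) : ℂ := ∏' n : ℕ, (1 - q ^ n * w)

section QPochhammer

variable {q : ℂ} (hq : ‖q‖ < 1) (w : ℂ)
include hq

theorem summable_norm_pow_mul : Summable fun n : ℕ ↦ ‖-(q ^ n * w)‖ := by
  simpa using (summable_geometric_of_lt_one (norm_nonneg q) hq).mul_right ‖w‖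

theorem multipliable_one_sub_pow_mul : Multipliable fun n : ℕ ↦ 1 - q ^ n * w := by
  simpa only [sub_eq_add_neg] using multipliable_one_add_of_summable (summable_norm_pow_mul hq w)

theorem qPochhammer_eq_mul : qPochhammer q w = (1 - w) * qPochhammer q (q * w) := by
  have hshift (n : ℕ) : 1 - q ^ n * (q * w) = 1 - q ^ (n + 1) * w := by ring
  have hmul := (multipliable_one_sub_pow_mul hq (q * w)).congr hshift
  simpa only [qPochhammer, hshift, pow_zero, one_mul] using
    tprod_eq_zero_mul' (f := fun n : ℕ ↦ 1 - q ^ n * w) hmul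

variable {w} in
theorem exists_pow_mul_eq_one_of_qPochhammer_eq_zero (hw : qPochhammer q w = 0) :
    ∃ n : ℕ, q ^ n * w = 1 := by
  by_contra! hne
  refine tprod_one_add_ne_zero_of_summable (f := fun n : ℕ ↦ -(q ^ n * w)) (fun n hn ↦ ?_)
    (summable_norm_pow_mul hq w) (by simpa only [qPochhammer, sub_eq_add_neg] using hw)
  exact hne n (by linear_combination -hn)

theorem differentiable_qPochhammer : Differentiable ℂ (qPochhammer q) := by
  have hprod : HasProdLocallyUniformlyOn (fun (n : ℕ) (w : ℂ) ↦ 1 + -(q ^ n * w))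
      (qPochhammer q) Set.univ := by
    rw [show qPochhammer q = fun w ↦ ∏' n : ℕ, (1 + -(q ^ n * w)) by
      funext w; simp only [qPochhammer, sub_eq_add_neg]]
    refine hasProdLocallyUniformlyOn_of_forall_compact isOpen_univ fun K _ hK ↦ ?_
    obtain ⟨M, hM⟩ := hK.isBounded.exists_norm_le
    refine ((summable_geometric_of_lt_one (norm_nonneg q) hq).mul_right
      M).hasProdUniformlyOn_nat_one_add hK (.of_forall fun n w hw ↦ ?_) fun _ ↦ by fun_prop
    rw [norm_neg, norm_mul, norm_pow]
    gcongr
    exact hM w hw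
  refine differentiableOn_univ.1 (hprod.differentiableOn (.of_forall fun _ ↦ ?_) isOpen_univ)
  simpa only [Finset.prod_fn] using DifferentiableOn.finsetProd fun _ _ ↦ by fun_prop

end QPochhammer

/-- `-i θ₁(z; τ) / η(τ)`, with Jacobi's theta function `θ₁` written as a triple product. -/
def thetaDivEta (τ : ℍ) (z : ℂ) : ℂ :=
  𝕢 1 (τ / 12 - z / 2) * qPochhammer (𝕢 1 τ) (𝕢 1 z) * qPochhammer (𝕢 1 τ) (𝕢 1 (τ - z))

section ThetaDivEta

variable (τ : ℍ) (z : ℂ)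

theorem norm_qParam_coe_lt_one : ‖𝕢 1 τ‖ < 1 :=
  Function.Periodic.norm_qParam_lt_one one_pos τ.im_pos

theorem thetaDivEta_zero : thetaDivEta τ 0 = 0 := by
  rw [thetaDivEta, qPochhammer_eq_mul (norm_qParam_coe_lt_one τ) (𝕢 1 0), qParam_zero, sub_self,
    zero_mul, mul_zero, zero_mul]

theorem thetaDivEta_add_one : thetaDivEta τ (z + 1) = -1 * thetaDivEta τ z := by
  rw [thetaDivEta, thetaDivEta, qParam_add 1 z 1,
    show τ - (z + 1) = τ - z + -1 by ring, qParam_add 1 (τ - z),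
    show τ / 12 - (z + 1) / 2 = τ / 12 - z / 2 + -(1 / 2) by ring, qParam_add 1 _ (-(1 / 2)),
    qParam_neg, qParam_neg, qParam_one_one, qParam_one_half]
  norm_num

theorem thetaDivEta_add_tau :
    thetaDivEta τ (z + τ) = -𝕢 1 (-z - τ / 2) * thetaDivEta τ z := by
  have hq := norm_qParam_coe_lt_one τ
  have hneg : qPochhammer (𝕢 1 τ) (𝕢 1 (τ - (z + τ))) =
      (1 - 𝕢 1 (-z)) * qPochhammer (𝕢 1 τ) (𝕢 1 (τ - z)) := by
    rw [show τ - (z + τ) = -z by ring, qPochhammer_eq_mul hq, ← qParam_add, ← sub_eq_add_neg]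
  have hpos : qPochhammer (𝕢 1 τ) (𝕢 1 z) =
      (1 - 𝕢 1 z) * qPochhammer (𝕢 1 τ) (𝕢 1 (z + τ)) := by
    rw [qPochhammer_eq_mul hq, ← qParam_add, add_comm (τ : ℂ)]
  have hlin : 1 - 𝕢 1 (-z) = -𝕢 1 (-z) * (1 - 𝕢 1 z) := by
    have := Function.Periodic.qParam_ne_zero (h := 1) z
    rw [qParam_neg]
    field_simp
    ring
  have hexp : 𝕢 1 (τ / 12 - (z + τ) / 2) * 𝕢 1 (-z) =
      𝕢 1 (-z - τ / 2) * 𝕢 1 (τ / 12 - z / 2) := by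
    rw [← qParam_add, ← qParam_add]
    ring_nf
  rw [thetaDivEta, thetaDivEta, hneg, hpos, hlin]
  linear_combination
    (-(1 - 𝕢 1 z) * qPochhammer (𝕢 1 τ) (𝕢 1 (z + τ)) * qPochhammer (𝕢 1 τ) (𝕢 1 (τ - z))) * hexp

theorem thetaDivEta_sub_tau :
    thetaDivEta τ (z - τ) = -𝕢 1 (z - τ / 2) * thetaDivEta τ z := by
  have hexp : 𝕢 1 (z - τ / 2) * 𝕢 1 (-(z - τ) - τ / 2) = 1 := by
    rw [← qParam_add, ← qParam_zero 1]
    ring_nf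
  have hadd := thetaDivEta_add_tau τ (z - τ)
  rw [sub_add_cancel] at hadd
  linear_combination 𝕢 1 (z - τ / 2) * hadd - thetaDivEta τ (z - τ) * hexp

theorem differentiable_thetaDivEta : Differentiable ℂ (thetaDivEta τ) := by
  have hP := differentiable_qPochhammer (norm_qParam_coe_lt_one τ)
  have := Function.Periodic.differentiable_qParam (h := 1)
  unfold thetaDivEta
  fun_prop

theorem eta_sq :
    ModularForm.eta τ ^ 2 = 𝕢 1 (τ / 12) * qPochhammer (𝕢 1 τ) (𝕢 1 τ) ^ 2 := by
  have hq : 𝕢 24 τ ^ 2 = 𝕢 1 (τ / 12) := by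
    rw [← qParam_natCast_mul, Function.Periodic.qParam, Function.Periodic.qParam]
    congr 1
    push_cast
    ring
  rw [ModularForm.eta, mul_pow, hq]
  rfl

/-- The factor `1 - e^{2πiz}` carries the zero; the remaining factor at `0` is `η(τ)²`. -/
theorem hasDerivAt_thetaDivEta_zero :
    HasDerivAt (thetaDivEta τ) (-(2 * π * Complex.I) * ModularForm.eta τ ^ 2) 0 := by
  have hq := norm_qParam_coe_lt_one τ
  have hP := differentiable_qPochhammer hq
  have := Function.Periodic.differentiable_qParam (h := 1)
  set k : ℂ → ℂ := fun z ↦ 𝕢 1 (τ / 12 - z / 2) * qPochhammer (𝕢 1 τ) (𝕢 1 (τ + z)) *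
    qPochhammer (𝕢 1 τ) (𝕢 1 (τ - z)) with hk
  have hfac : thetaDivEta τ = (fun z ↦ 1 - 𝕢 1 z) * k := by
    funext z
    rw [thetaDivEta, qPochhammer_eq_mul hq (𝕢 1 z), ← qParam_add, Pi.mul_apply, hk]
    ring
  have hk_deriv : HasDerivAt k (deriv k 0) 0 :=
    DifferentiableAt.hasDerivAt (by fun_prop)
  rw [hfac, eta_sq]
  refine (((hasDerivAt_qParam 1 0).const_sub 1).mul hk_deriv).congr_deriv ?_
  simp only [hk, qParam_zero, ofReal_one, div_one, mul_one, add_zero, sub_zero, zero_div, sub_self,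
    zero_mul]
  ring

end ThetaDivEta

/-- The lattice `ℤτ + ℤ`. -/
def tauPeriodPair (τ : ℍ) : PeriodPair where
  ω₁ := τ
  ω₂ := 1
  indep := LinearIndependent.pair_iff.2 fun s t hst ↦ by
    have hs : s = 0 := by simpa [τ.im_ne_zero] using congrArg Complex.im hst
    have ht : t = 0 := by simpa [hs] using congrArg Complex.re hst
    exact ⟨hs, ht⟩

section ThetaDivEtaTransformation

variable (τ : ℍ)

variable {τ} in
theorem mem_lattice_of_thetaDivEta_eq_zero {z : ℂ} (hz : thetaDivEta τ z = 0) :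
    z ∈ (tauPeriodPair τ).lattice := by
  have mem_of_eq_zero {w : ℂ} (hw : qPochhammer (𝕢 1 τ) (𝕢 1 w) = 0) :
      w ∈ (tauPeriodPair τ).lattice := by
    obtain ⟨n, hn⟩ := exists_pow_mul_eq_one_of_qPochhammer_eq_zero (norm_qParam_coe_lt_one τ) hw
    rw [← qParam_natCast_mul, ← qParam_add, qParam_one_eq_one_iff] at hn
    obtain ⟨k, hk⟩ := hn
    refine PeriodPair.mem_lattice.2 ⟨-n, k, ?_⟩
    simp only [tauPeriodPair]
    push_cast
    linear_combination -hk
  simp only [thetaDivEta, mul_eq_zero, Function.Periodic.qParam_ne_zero, false_or] at hz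
  rcases hz with hz | hz
  · exact mem_of_eq_zero hz
  · exact sub_sub_cancel (τ : ℂ) z ▸ sub_mem (tauPeriodPair τ).ω₁_mem_lattice (mem_of_eq_zero hz)

theorem analyticOrderAt_thetaDivEta_zero : analyticOrderAt (thetaDivEta τ) 0 = 1 := by
  refine ((differentiable_thetaDivEta τ).analyticAt 0).analyticOrderAt_eq_one_of_zero_deriv_ne_zero
    (thetaDivEta_zero τ) ?_
  rw [(hasDerivAt_thetaDivEta_zero τ).deriv]
  exact mul_ne_zero (neg_ne_zero.2 two_pi_I_ne_zero)
    (pow_ne_zero 2 (ModularForm.eta_ne_zero τ.im_pos))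

/-- Entire functions with the multipliers of `thetaDivEta τ` under translation by `1` and `τ`. -/
structure HasThetaMultipliers (τ : ℍ) (f : ℂ → ℂ) : Prop where
  differentiable : Differentiable ℂ f
  add_one (z : ℂ) : f (z + 1) = -1 * f z
  add_tau (z : ℂ) : f (z + τ) = -𝕢 1 (-z - τ / 2) * f z

theorem hasThetaMultipliers_thetaDivEta : HasThetaMultipliers τ (thetaDivEta τ) where
  differentiable := differentiable_thetaDivEta τ
  add_one := thetaDivEta_add_one τ
  add_tau := thetaDivEta_add_tau τ

namespace HasThetaMultipliers

variable {τ} {f : ℂ → ℂ}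

theorem analyticOrderAt_eq (hf : HasThetaMultipliers τ f) {z : ℂ}
    (hz : z ∈ (tauPeriodPair τ).lattice) : analyticOrderAt f z = analyticOrderAt f 0 := by
  have := Function.Periodic.differentiable_qParam (h := 1)
  have hτ := analyticOrderAt_periodic_of_multiplier hf.differentiable
    (μ := fun z ↦ -𝕢 1 (-z - τ / 2)) (by fun_prop)
    (fun z ↦ neg_ne_zero.2 (Function.Periodic.qParam_ne_zero _)) hf.add_tau
  have h1 := analyticOrderAt_periodic_of_multiplier hf.differentiable
    (differentiable_const (-1)) (fun _ ↦ neg_ne_zero.2 one_ne_zero) hf.add_one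
  simpa using apply_add_of_mem_lattice (tauPeriodPair τ) hτ h1 0 hz

theorem exists_eq_const_mul_thetaDivEta (hf : HasThetaMultipliers τ f) (hf0 : f 0 = 0) :
    ∃ c : ℂ, ∀ z, f z = c * thetaDivEta τ z := by
  have hΘ := hasThetaMultipliers_thetaDivEta τ
  refine exists_eq_const_mul_of_multipliers (tauPeriodPair τ) hf.differentiable hΘ.differentiable
    hf.add_tau hΘ.add_tau hf.add_one hΘ.add_one fun z ↦ ?_
  by_cases hz : thetaDivEta τ z = 0
  · have hlat := mem_lattice_of_thetaDivEta_eq_zero hz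
    rw [hf.analyticOrderAt_eq hlat, hΘ.analyticOrderAt_eq hlat, analyticOrderAt_thetaDivEta_zero,
      Order.one_le_iff_ne_zero, analyticOrderAt_ne_zero]
    exact ⟨hf.differentiable.analyticAt 0, hf0⟩
  · rw [(hΘ.differentiable.analyticAt z).analyticOrderAt_eq_zero.2 hz]
    exact zero_le

end HasThetaMultipliers

theorem coe_S_smul : ((ModularGroup.S • τ : ℍ) : ℂ) = -1 / τ := by
  rw [UpperHalfPlane.modular_S_smul, neg_div, one_div, ← inv_neg]

theorem eta_S_smul_sq :
    ModularForm.eta (ModularGroup.S • τ : ℍ) ^ 2 = -Complex.I * τ * ModularForm.eta τ ^ 2 := by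
  have hsqrt (w : ℂ) : Complex.sqrt w ^ 2 = w := by simp [Complex.sqrt]
  have h : ModularForm.eta (-1 / τ) =
      (Complex.sqrt Complex.I)⁻¹ * (Complex.sqrt τ * ModularForm.eta τ) :=
    ModularForm.eta_comp_eq_csqrt_I_inv τ.2
  rw [coe_S_smul, h, mul_pow, mul_pow, inv_pow, hsqrt, hsqrt, Complex.inv_I, mul_assoc]

/-- The pullback of `thetaDivEta` along `(τ, z) ↦ (-1/τ, z/τ)`, renormalised so as to acquire
the same multipliers as `thetaDivEta τ` under translation by `1` and `τ`. -/
def thetaDivEtaS (τ : ℍ) (z : ℂ) : ℂ :=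
  𝕢 1 (-(z ^ 2 / (2 * τ))) * thetaDivEta (ModularGroup.S • τ) (z / τ)

theorem thetaDivEtaS_zero : thetaDivEtaS τ 0 = 0 := by
  rw [thetaDivEtaS, zero_div, thetaDivEta_zero, mul_zero]

theorem differentiable_thetaDivEtaS : Differentiable ℂ (thetaDivEtaS τ) := by
  have hΘ := differentiable_thetaDivEta (ModularGroup.S • τ)
  have := Function.Periodic.differentiable_qParam (h := 1)
  unfold thetaDivEtaS
  fun_prop

theorem thetaDivEtaS_add_one (z : ℂ) : thetaDivEtaS τ (z + 1) = -1 * thetaDivEtaS τ z := by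
  have hτ := τ.ne_zero
  have hexp : 𝕢 1 (-((z + 1) ^ 2 / (2 * τ))) * 𝕢 1 (z / τ - -1 / τ / 2) =
      𝕢 1 (-(z ^ 2 / (2 * τ))) := by
    rw [← qParam_add]
    congr 1
    field_simp
    ring
  rw [thetaDivEtaS, show (z + 1) / τ = z / τ - (ModularGroup.S • τ : ℍ) by rw [coe_S_smul]; ring,
    thetaDivEta_sub_tau, coe_S_smul, thetaDivEtaS, ← hexp]
  ring

theorem thetaDivEtaS_add_tau (z : ℂ) :
    thetaDivEtaS τ (z + τ) = -𝕢 1 (-z - τ / 2) * thetaDivEtaS τ z := by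
  have hτ := τ.ne_zero
  have hexp : 𝕢 1 (-((z + τ) ^ 2 / (2 * τ))) = 𝕢 1 (-z - τ / 2) * 𝕢 1 (-(z ^ 2 / (2 * τ))) := by
    rw [← qParam_add]
    congr 1
    field_simp
    ring
  rw [thetaDivEtaS, show (z + τ) / τ = z / τ + 1 by field_simp, thetaDivEta_add_one, hexp,
    thetaDivEtaS]
  ring

theorem hasDerivAt_thetaDivEtaS_zero :
    HasDerivAt (thetaDivEtaS τ)
      (-Complex.I * (-(2 * π * Complex.I) * ModularForm.eta τ ^ 2)) 0 := by
  have hΘ : HasDerivAt (fun z : ℂ ↦ thetaDivEta (ModularGroup.S • τ) (z / τ))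
      (-(2 * π * Complex.I) * ModularForm.eta (ModularGroup.S • τ : ℍ) ^ 2 * (1 / τ)) 0 :=
    HasDerivAt.comp_of_eq (h₂ := thetaDivEta (ModularGroup.S • τ)) 0
      (hasDerivAt_thetaDivEta_zero (ModularGroup.S • τ))
      ((hasDerivAt_id (0 : ℂ)).div_const (τ : ℂ)) (zero_div (τ : ℂ)).symm
  have hQ : DifferentiableAt ℂ (fun z : ℂ ↦ 𝕢 1 (-(z ^ 2 / (2 * τ)))) 0 := by
    have := Function.Periodic.differentiable_qParam (h := 1)
    fun_prop
  refine (hQ.hasDerivAt.mul hΘ).congr_deriv ?_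
  have hτ := τ.ne_zero
  simp only [zero_div, thetaDivEta_zero, mul_zero, zero_add, ne_eq, OfNat.ofNat_ne_zero,
    not_false_eq_true, zero_pow, neg_zero, qParam_zero, eta_S_smul_sq]
  field_simp

theorem hasThetaMultipliers_thetaDivEtaS : HasThetaMultipliers τ (thetaDivEtaS τ) where
  differentiable := differentiable_thetaDivEtaS τ
  add_one := thetaDivEtaS_add_one τ
  add_tau := thetaDivEtaS_add_tau τ

theorem thetaDivEtaS_eq (z : ℂ) : thetaDivEtaS τ z = -Complex.I * thetaDivEta τ z := by
  obtain ⟨c, hc⟩ := (hasThetaMultipliers_thetaDivEtaS τ).exists_eq_const_mul_thetaDivEta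
    (thetaDivEtaS_zero τ)
  have hderiv :
      HasDerivAt (thetaDivEtaS τ) (c * (-(2 * π * Complex.I) * ModularForm.eta τ ^ 2)) 0 :=
    funext hc ▸ (hasDerivAt_thetaDivEta_zero τ).const_mul c
  have hη : -(2 * π * Complex.I) * ModularForm.eta τ ^ 2 ≠ 0 :=
    mul_ne_zero (neg_ne_zero.2 two_pi_I_ne_zero)
      (pow_ne_zero 2 (ModularForm.eta_ne_zero τ.im_pos))
  rw [hc, mul_right_cancel₀ hη (hderiv.unique (hasDerivAt_thetaDivEtaS_zero τ))]

theorem thetaDivEta_S_smul (z : ℂ) :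
    thetaDivEta (ModularGroup.S • τ) (z / τ) =
      -Complex.I * 𝕢 1 (z ^ 2 / (2 * τ)) * thetaDivEta τ z := by
  have hne := Function.Periodic.qParam_ne_zero (h := 1) (z ^ 2 / (2 * τ))
  have hS := thetaDivEtaS_eq τ z
  rw [thetaDivEtaS, qParam_neg, inv_mul_eq_iff_eq_mul₀ hne] at hS
  rw [hS]
  ring

theorem coe_T_smul : ((ModularGroup.T • τ : ℍ) : ℂ) = τ + 1 := by
  rw [UpperHalfPlane.modular_T_smul, UpperHalfPlane.coe_vadd, ofReal_one, add_comm]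

theorem thetaDivEta_T_smul (z : ℂ) :
    thetaDivEta (ModularGroup.T • τ) z = 𝕢 1 (1 / 12) * thetaDivEta τ z := by
  simp only [thetaDivEta, coe_T_smul]
  rw [show (τ : ℂ) + 1 - z = τ - z + 1 by ring, qParam_add 1 _ 1, qParam_add 1 (τ - z) 1,
    qParam_one_one, show ((τ : ℂ) + 1) / 12 - z / 2 = 1 / 12 + (τ / 12 - z / 2) by ring,
    qParam_add 1 (1 / 12)]
  ring_nf

end ThetaDivEtaTransformation

section Siegel

variable (r : ℚ × ℚ) (τ : ℍ)

theorem siegel_eq :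
    siegel r τ = -𝕢 1 (r.1 * (r.1 * τ + r.2) / 2) * thetaDivEta τ (r.1 * τ + r.2) := by
  have hq := norm_qParam_coe_lt_one τ
  set z : ℂ := r.1 * τ + r.2 with hz
  have hprod : (∏' n : ℕ,
      ((1 - Complex.exp (2 * π * Complex.I * ((n + 1 + r.1) * τ + r.2))) *
        (1 - Complex.exp (2 * π * Complex.I * ((n + 1 - r.1) * τ - r.2))))) =
      qPochhammer (𝕢 1 τ) (𝕢 1 τ * 𝕢 1 z) * qPochhammer (𝕢 1 τ) (𝕢 1 (τ - z)) := by
    simp only [qPochhammer]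
    rw [← (multipliable_one_sub_pow_mul hq _).tprod_mul (multipliable_one_sub_pow_mul hq _)]
    refine tprod_congr fun n ↦ ?_
    rw [← qParam_natCast_mul, ← qParam_add, ← qParam_add, ← qParam_add]
    simp only [qParam_one, hz]
    ring_nf
  have hexp : Complex.exp (π * Complex.I * (((r.1 : ℂ) ^ 2 - r.1 + 1 / 6) * τ)) *
      Complex.exp (π * Complex.I * r.2 * (r.1 - 1)) = 𝕢 1 (r.1 * z / 2) * 𝕢 1 (τ / 12 - z / 2) := by
    simp only [qParam_one, ← Complex.exp_add, hz]
    ring_nf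
  rw [siegel, hprod, thetaDivEta, qPochhammer_eq_mul hq (𝕢 1 z), ← qParam_one]
  linear_combination (-(1 - 𝕢 1 z) * qPochhammer (𝕢 1 τ) (𝕢 1 τ * 𝕢 1 z) *
    qPochhammer (𝕢 1 τ) (𝕢 1 (τ - z))) * hexp

theorem siegel_S_smul :
    siegel r (ModularGroup.S • τ) = -Complex.I * siegel (tAct ModularGroup.S r) τ := by
  have hτ := τ.ne_zero
  have hact : tAct ModularGroup.S r = (r.2, -r.1) := by simp [tAct, ModularGroup.S]
  have harg : (r.1 : ℂ) * (-1 / τ) + r.2 = (r.2 * τ - r.1) / τ := by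
    field_simp
    ring
  have hexp : 𝕢 1 (r.1 * ((r.2 * τ - r.1) / τ) / 2) * 𝕢 1 ((r.2 * τ - r.1) ^ 2 / (2 * τ)) =
      𝕢 1 (r.2 * (r.2 * τ - r.1) / 2) := by
    rw [← qParam_add]
    congr 1
    field_simp
    ring
  rw [siegel_eq, siegel_eq, hact, coe_S_smul, harg, thetaDivEta_S_smul, Rat.cast_neg,
    ← sub_eq_add_neg, ← hexp]
  ring

theorem siegel_T_smul :
    siegel r (ModularGroup.T • τ) = 𝕢 1 (1 / 12) * siegel (tAct ModularGroup.T r) τ := by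
  have hact : tAct ModularGroup.T r = (r.1, r.1 + r.2) := by simp [tAct, ModularGroup.T]
  have harg : (r.1 : ℂ) * (τ + 1) + r.2 = r.1 * τ + (r.1 + r.2 : ℚ) := by
    push_cast
    ring
  rw [siegel_eq, siegel_eq, hact, coe_T_smul, harg, thetaDivEta_T_smul]
  ring

theorem tAct_one : tAct 1 r = r := by
  simp [tAct]

theorem tAct_mul (γ δ : SL(2, ℤ)) : tAct (γ * δ) r = tAct δ (tAct γ r) := by
  simp only [tAct, Matrix.SpecialLinearGroup.coe_mul, Matrix.mul_apply, Fin.sum_univ_two]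
  push_cast
  ext <;> ring

end Siegel

theorem exists_siegel_smul_eq (γ : SL(2, ℤ)) :
    ∃ ε : ℂ, ε ^ 12 = 1 ∧ ∀ r τ, siegel r (γ • τ) = ε * siegel (tAct γ r) τ := by
  have hγ : γ ∈ Subgroup.closure {ModularGroup.S, ModularGroup.T} :=
    SpecialLinearGroup.SL2Z_generators ▸ Subgroup.mem_top γ
  induction hγ using Subgroup.closure_induction with
  | mem γ hγ =>
    rcases hγ with rfl | rfl
    · refine ⟨-Complex.I, ?_, siegel_S_smul⟩
      rw [neg_pow, show 12 = 4 * 3 from rfl, pow_mul Complex.I, Complex.I_pow_four]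
      norm_num
    · refine ⟨𝕢 1 (1 / 12), ?_, siegel_T_smul⟩
      rw [← qParam_natCast_mul, Nat.cast_ofNat, mul_one_div_cancel (by norm_num), qParam_one_one]
  | one => exact ⟨1, one_pow 12, fun r τ ↦ by rw [one_smul, tAct_one, one_mul]⟩
  | mul γ δ _ _ hγ hδ =>
    obtain ⟨ε₁, hε₁, h₁⟩ := hγ
    obtain ⟨ε₂, hε₂, h₂⟩ := hδ
    refine ⟨ε₁ * ε₂, by rw [mul_pow, hε₁, hε₂, one_mul], fun r τ ↦ ?_⟩
    rw [mul_smul, h₁, h₂, tAct_mul, mul_assoc]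
  | inv γ _ hγ =>
    obtain ⟨ε, hε, h⟩ := hγ
    have hε0 : ε ≠ 0 := by
      rintro rfl
      norm_num at hε
    refine ⟨ε⁻¹, by rw [inv_pow, hε, inv_one], fun r τ ↦ ?_⟩
    rw [eq_inv_mul_iff_mul_eq₀ hε0]
    have := h (tAct γ⁻¹ r) (γ⁻¹ • τ)
    rw [smul_inv_smul, ← tAct_mul, inv_mul_cancel, tAct_one] at this
    exact this.symm

section Finprod

variable {α : Type*} {m : α → ℤ}

theorem hasFiniteMulSupport_zpow {G : Type*} [DivInvMonoid G] (hm : m.support.Finite)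
    (f : α → G) : (fun i ↦ f i ^ m i).HasFiniteMulSupport :=
  hm.subset fun i hi h0 ↦ hi (by simp [h0])

theorem finprod_const_zpow {G₀ : Type*} [CommGroupWithZero G₀] {a : G₀} (ha : a ≠ 0)
    (hm : m.support.Finite) : ∏ᶠ i, a ^ m i = a ^ ∑ᶠ i, m i := by
  have hfin : (Function.mulSupport fun i ↦ a ^ m i) ⊆ hm.toFinset := fun i hi ↦ by
    simpa using fun h0 ↦ hi (by simp [h0])
  rw [finprod_eq_prod_of_mulSupport_subset _ hfin, finsum_eq_sum m hm]
  induction hm.toFinset using Finset.cons_induction with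
  | empty => simp
  | cons i s hi ih => rw [Finset.prod_cons, Finset.sum_cons, zpow_add₀ ha, ih]

end Finprod

/-- if `∑_r m(r) ≡ 0 (mod 12)` then
`∏_r g_r(γτ)^{m(r)} = ∏_r g_{ᵗγ r}(τ)^{m(r)}` for every `γ ∈ SL₂(ℤ)`. -/
theorem statement7 (N : ℕ) (hN : 1 < N) (m : ℚ × ℚ → ℤ)
    (hmem : ∀ r : ℚ × ℚ, m r ≠ 0 → InDen N r ∧ NonIntegral r)
    (hfin : (Function.support m).Finite)
    (hsum : (12 : ℤ) ∣ ∑ᶠ r : ℚ × ℚ, m r) :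
    ∀ γ : SL(2, ℤ), ∀ τ : ℍ,
      (∏ᶠ r : ℚ × ℚ, siegel r (γ • τ) ^ m r) =
        ∏ᶠ r : ℚ × ℚ, siegel (tAct γ r) τ ^ m r := by
  intro γ τ
  obtain ⟨ε, hε, hsiegel⟩ := exists_siegel_smul_eq γ
  have hε0 : ε ≠ 0 := by
    rintro rfl
    norm_num at hε
  have hmult : ε ^ ∑ᶠ r, m r = 1 := by
    obtain ⟨k, hk⟩ := hsum
    rw [hk, _root_.zpow_mul, zpow_ofNat, hε, _root_.one_zpow]
  calc ∏ᶠ r, siegel r (γ • τ) ^ m r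
      = ∏ᶠ r, ε ^ m r * siegel (tAct γ r) τ ^ m r := by
        simp only [hsiegel, mul_zpow]
    _ = (∏ᶠ r, ε ^ m r) * ∏ᶠ r, siegel (tAct γ r) τ ^ m r :=
        finprod_mul_distrib (hasFiniteMulSupport_zpow hfin _) (hasFiniteMulSupport_zpow hfin _)
    _ = ∏ᶠ r, siegel (tAct γ r) τ ^ m r := by
        rw [finprod_const_zpow hε0 hfin, hmult, one_mul]
end
end
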